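/- arXiv:math/0608591 — 2 statements merged into one kernel-verified Lean document; each statement's English description precedes it below -/
import Mathlib

section
/- Let 𝒜 be a nonempty real central arrangement of hyperplanes in ℝ^ℓ with decomposition 𝒜 = 𝒜₁ ⊎ 𝒜₂ ⊎ ⋯ ⊎ 𝒜_r into nonempty indecomposable arrangements, and let m be a positive integer. Then there exists a natural bijection AM(𝒜, m) ≃ AM(𝒜₁, m) × AM(𝒜₂, m) × ⋯ × AM(𝒜_r, m). -/
/-!
A chamber is determined by its signs, because the points with prescribed signs form a convex set.
Additivity of the rank says that the injection `V / ⋂ᵢ Kᵢ → ∏ᵢ V / Kᵢ`, with `Kᵢ` the intersection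
of the hyperplanes of the `i`-th block, is between spaces of equal dimension, hence onto: chambers
of the blocks can be prescribed independently, and `Ch(𝒜) = ∏ᵢ Ch(𝒜ᵢ)`. Admissibility says that the
`j`-th sign of the output depends only on the `j`-th signs of the inputs, so under this
identification an admissible map acts on each block separately.
-/

noncomputable section
attribute [local instance] Classical.propDecidable

/-- A (nonempty if `ι` is nonempty) real central arrangement of hyperplanes in `ℝ^ℓ`,
given by a family of nonzero defining linear forms with pairwise distinct kernels
(the hyperplanes `H j = ker (form j)`). -/
structure Arrangement (ℓ : ℕ) (ι : Type) [Fintype ι] where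
  form : ι → ((Fin ℓ → ℝ) →ₗ[ℝ] ℝ)
  form_ne_zero : ∀ j, form j ≠ 0
  ker_injective : ∀ j k, LinearMap.ker (form j) = LinearMap.ker (form k) → j = k

namespace Arrangement

variable {ℓ : ℕ} {ι : Type} [Fintype ι]

/-- The complement `ℝ^ℓ ∖ (H₁ ∪ ⋯ ∪ Hₙ)`. -/
def Complement (A : Arrangement ℓ ι) : Set (Fin ℓ → ℝ) :=
  {x | ∀ j, A.form j x ≠ 0}

/-- A chamber is a connected component of the complement. -/
def IsChamber (A : Arrangement ℓ ι) (C : Set (Fin ℓ → ℝ)) : Prop :=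
  ∃ x ∈ A.Complement, C = connectedComponentIn A.Complement x

/-- The set (type) of chambers of the arrangement. -/
abbrev Ch (A : Arrangement ℓ ι) : Type := {C : Set (Fin ℓ → ℝ) // A.IsChamber C}

/-- `εⱼ^σ(C) = στ` when `C ⊆ Hⱼ^τ`; `B = {+,-}` is realized as `ℤˣ`, `+ = 1`, `- = -1`. -/
def eps (A : Arrangement ℓ ι) (j : ι) (σ : ℤˣ) (C : A.Ch) : ℤˣ :=
  σ * (if ∀ x ∈ C.1, 0 < A.form j x then 1 else -1)

/-- `Φ : Ch^m → Ch` is admissible if there is a family `φⱼ^σ : B^m → B` with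
`φⱼ^σ(+,…,+) = +` and `εⱼ^σ ∘ Φ = φⱼ^σ ∘ εⱼ^σ` (componentwise) for all `j, σ`. -/
def IsAdmissible (A : Arrangement ℓ ι) (m : ℕ) (Φ : (Fin m → A.Ch) → A.Ch) : Prop :=
  ∃ φ : ι → ℤˣ → ((Fin m → ℤˣ) → ℤˣ),
    (∀ j σ, φ j σ (fun _ => 1) = 1) ∧
    ∀ j σ 𝒞, A.eps j σ (Φ 𝒞) = φ j σ (fun i => A.eps j σ (𝒞 i))

/-- `r(ℬ) = codim (⋂_{H ∈ ℬ} H)` for the subarrangement indexed by `S`. -/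
def rnkOn (A : Arrangement ℓ ι) (S : Finset ι) : ℕ :=
  ℓ - Module.finrank ℝ ↥(⨅ j ∈ S, LinearMap.ker (A.form j))

/-- `r(𝒜)`. -/
def rnk (A : Arrangement ℓ ι) : ℕ := A.rnkOn Finset.univ

/-- The subarrangement indexed by `S` decomposes as a disjoint union of two nonempty
subarrangements with additive rank. -/
def DecomposableOn (A : Arrangement ℓ ι) (S : Finset ι) : Prop :=
  ∃ S₁ S₂ : Finset ι, S₁.Nonempty ∧ S₂.Nonempty ∧ Disjoint S₁ S₂ ∧ S₁ ∪ S₂ = S ∧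
    A.rnkOn S = A.rnkOn S₁ + A.rnkOn S₂

def IndecomposableOn (A : Arrangement ℓ ι) (S : Finset ι) : Prop := ¬ A.DecomposableOn S

def Decomposable (A : Arrangement ℓ ι) : Prop := A.DecomposableOn Finset.univ

def Indecomposable (A : Arrangement ℓ ι) : Prop := ¬ A.Decomposable

/-- The subarrangement of `A` consisting of the hyperplanes indexed by `S`. -/
def restrict (A : Arrangement ℓ ι) (S : Finset ι) : Arrangement ℓ {j : ι // j ∈ S} where
  form := fun j => A.form j.1
  form_ne_zero := fun j => A.form_ne_zero j.1
  ker_injective := fun j k h => Subtype.ext (A.ker_injective j.1 k.1 h)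

/-- A dependent subarrangement: `r(ℬ) < |ℬ|`. -/
def DependentOn (A : Arrangement ℓ ι) (S : Finset ι) : Prop := A.rnkOn S < S.card

/-- A circuit: a minimally dependent subarrangement. -/
def IsCircuitOn (A : Arrangement ℓ ι) (S : Finset ι) : Prop :=
  A.DependentOn S ∧ ∀ T ⊂ S, ¬ A.DependentOn T

end Arrangement

lemma surjective_pi_mkQ_of_finrank_quotient_iInf {κ k V : Type*} [Fintype κ] [DivisionRing k]
    [AddCommGroup V] [Module k V] (K : κ → Submodule k V)
    [∀ i, FiniteDimensional k (V ⧸ K i)]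
    (h : Module.finrank k (V ⧸ ⨅ i, K i) = ∑ i, Module.finrank k (V ⧸ K i)) :
    Function.Surjective (LinearMap.pi fun i => (K i).mkQ) := by
  set f := LinearMap.pi fun i => (K i).mkQ
  have hker : LinearMap.ker f = ⨅ i, K i := by
    simp only [f, LinearMap.ker_pi, Submodule.ker_mkQ]
  rw [← LinearMap.range_eq_top]
  apply Submodule.eq_top_of_finrank_eq
  rw [← f.quotKerEquivRange.finrank_eq, hker, h, Module.finrank_pi_fintype]

namespace Arrangement

variable {ℓ : ℕ} {ι : Type} [Fintype ι]

section Chambers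

variable (A : Arrangement ℓ ι)

lemma complement_eq_iInter : A.Complement = ⋂ j, A.form j ⁻¹' {0}ᶜ := by
  ext x
  simp [Complement]

lemma isOpen_complement : IsOpen A.Complement := by
  rw [complement_eq_iInter]
  exact isOpen_iInter_of_finite fun j =>
    isOpen_compl_singleton.preimage (A.form j).continuous_of_finiteDimensional

lemma dense_complement : Dense A.Complement := by
  have hopen (j : ι) : IsOpen (A.form j ⁻¹' {0}ᶜ) :=
    isOpen_compl_singleton.preimage (A.form j).continuous_of_finiteDimensional
  have hdense (j : ι) : Dense (A.form j ⁻¹' {0}ᶜ) :=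
    (dense_compl_singleton 0).preimage <|
      (A.form j).isOpenMap_of_finiteDimensional (LinearMap.surjective (A.form_ne_zero j))
  exact A.complement_eq_iInter ▸ dense_iInter_of_isOpen hopen hdense

variable {A}

/-- The chamber containing a given point of the complement. -/
def chamberOf {x : Fin ℓ → ℝ} (hx : x ∈ A.Complement) : A.Ch :=
  ⟨connectedComponentIn A.Complement x, x, hx, rfl⟩

lemma mem_chamberOf {x : Fin ℓ → ℝ} (hx : x ∈ A.Complement) : x ∈ (chamberOf hx).1 :=
  mem_connectedComponentIn hx

namespace Ch

variable {C D : A.Ch} {x y : Fin ℓ → ℝ}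

lemma nonempty (C : A.Ch) : C.1.Nonempty := by
  obtain ⟨_, x, hx, rfl⟩ := C
  exact ⟨x, mem_connectedComponentIn hx⟩

lemma subset_complement (C : A.Ch) : C.1 ⊆ A.Complement := by
  obtain ⟨_, x, hx, rfl⟩ := C
  exact connectedComponentIn_subset _ _

lemma isPreconnected (C : A.Ch) : IsPreconnected C.1 := by
  obtain ⟨_, x, hx, rfl⟩ := C
  exact isPreconnected_connectedComponentIn

lemma isOpen (C : A.Ch) : IsOpen C.1 := by
  obtain ⟨_, x, hx, rfl⟩ := C
  exact A.isOpen_complement.connectedComponentIn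

lemma eq_of_mem_of_mem (hC : x ∈ C.1) (hD : x ∈ D.1) : C = D := by
  obtain ⟨_, y, hy, rfl⟩ := C
  obtain ⟨_, z, hz, rfl⟩ := D
  exact Subtype.ext ((connectedComponentIn_eq hC).trans (connectedComponentIn_eq hD).symm)

lemma eq_of_segment_subset (hx : x ∈ C.1) (hy : y ∈ D.1)
    (h : segment ℝ x y ⊆ A.Complement) : C = D := by
  have hy' : y ∈ connectedComponentIn A.Complement x :=
    (convex_segment x y).isPreconnected.subset_connectedComponentIn (left_mem_segment ℝ x y) h
      (right_mem_segment ℝ x y)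
  have hC : C = chamberOf (C.subset_complement hx) := eq_of_mem_of_mem hx (mem_chamberOf _)
  exact eq_of_mem_of_mem (hC ▸ hy') hy

lemma form_pos_of_form_pos (hx : x ∈ C.1) (hy : y ∈ C.1) {j : ι} (hpos : 0 < A.form j x) :
    0 < A.form j y := by
  by_contra! hneg
  obtain ⟨z, hz, hz0⟩ := C.isPreconnected.intermediate_value hy hx
    (A.form j).continuous_of_finiteDimensional.continuousOn ⟨hneg, hpos.le⟩
  exact C.subset_complement hz j hz0

end Ch

lemma eps_of_mem {C : A.Ch} {x : Fin ℓ → ℝ} (hx : x ∈ C.1) (j : ι) (σ : ℤˣ) :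
    A.eps j σ C = σ * (if 0 < A.form j x then 1 else -1) := by
  have h : (∀ y ∈ C.1, 0 < A.form j y) ↔ 0 < A.form j x :=
    ⟨fun h => h x hx, fun hpos _ hy => Ch.form_pos_of_form_pos hx hy hpos⟩
  simp only [eps, h]

lemma eps_one_eq_one_iff {C : A.Ch} {x : Fin ℓ → ℝ} (hx : x ∈ C.1) {j : ι} :
    A.eps j 1 C = 1 ↔ 0 < A.form j x := by
  simp [eps_of_mem hx]

lemma segment_subset_complement {x y : Fin ℓ → ℝ} (hx : x ∈ A.Complement)
    (hy : y ∈ A.Complement) (h : ∀ j, 0 < A.form j x ↔ 0 < A.form j y) :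
    segment ℝ x y ⊆ A.Complement := by
  intro z hz j
  rcases (hx j).lt_or_gt with hxj | hxj
  · have hyj : A.form j y < 0 := (hy j).lt_of_le (not_lt.1 (mt (h j).2 hxj.not_gt))
    exact (((convex_Iio 0).linear_preimage (A.form j)).segment_subset hxj hyj hz).ne
  · exact (((convex_Ioi 0).linear_preimage (A.form j)).segment_subset hxj ((h j).1 hxj) hz).ne'

lemma Ch.ext_eps {C D : A.Ch} (h : ∀ j, A.eps j 1 C = A.eps j 1 D) : C = D := by
  obtain ⟨x, hx⟩ := C.nonempty
  obtain ⟨y, hy⟩ := D.nonempty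
  refine eq_of_segment_subset hx hy <|
    segment_subset_complement (C.subset_complement hx) (D.subset_complement hy) fun j => ?_
  rw [← eps_one_eq_one_iff hx, ← eps_one_eq_one_iff hy, h j]

end Chambers

section Restriction

variable (A : Arrangement ℓ ι) (S : Finset ι)

variable {A} in
lemma complement_subset_complement_restrict : A.Complement ⊆ (A.restrict S).Complement :=
  fun _ hx j => hx j.1

/-- The chamber of the subarrangement indexed by `S` that contains a given chamber of `A`. -/
def restrictCh (C : A.Ch) : (A.restrict S).Ch :=
  chamberOf (A.complement_subset_complement_restrict S (C.subset_complement C.nonempty.some_mem))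

variable {A S}

lemma eps_eq_eps_restrict_of_mem {C : A.Ch} {D : (A.restrict S).Ch} {x : Fin ℓ → ℝ}
    (hC : x ∈ C.1) (hD : x ∈ D.1) (j : {j // j ∈ S}) (σ : ℤˣ) :
    (A.restrict S).eps j σ D = A.eps j.1 σ C :=
  (eps_of_mem hD j σ).trans (eps_of_mem hC j.1 σ).symm

@[simp]
lemma eps_restrictCh (C : A.Ch) (j : {j // j ∈ S}) (σ : ℤˣ) :
    (A.restrict S).eps j σ (A.restrictCh S C) = A.eps j.1 σ C :=
  eps_eq_eps_restrict_of_mem C.nonempty.some_mem (mem_chamberOf _) j σ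

lemma restrictCh_eq_of_mem {C : A.Ch} {D : (A.restrict S).Ch} {x : Fin ℓ → ℝ}
    (hC : x ∈ C.1) (hD : x ∈ D.1) : A.restrictCh S C = D :=
  Ch.ext_eps fun j => by rw [eps_restrictCh, eps_eq_eps_restrict_of_mem hC hD]

variable (A S) in
lemma restrictCh_surjective : Function.Surjective (A.restrictCh S) := fun D => by
  obtain ⟨x, hxD, hxA⟩ := A.dense_complement.inter_open_nonempty D.1 D.isOpen D.nonempty
  exact ⟨chamberOf hxA, restrictCh_eq_of_mem (mem_chamberOf hxA) hxD⟩

end Restriction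

section Blocks

variable (A : Arrangement ℓ ι) {κ : Type*} {P : κ → Finset ι}

/-- The flat `⋂_{j ∈ S} H_j` of the subarrangement indexed by `S`. -/
def flat (S : Finset ι) : Submodule ℝ (Fin ℓ → ℝ) := ⨅ j ∈ S, LinearMap.ker (A.form j)

lemma mem_flat {S : Finset ι} {x : Fin ℓ → ℝ} : x ∈ A.flat S ↔ ∀ j ∈ S, A.form j x = 0 := by
  simp only [flat, Submodule.mem_iInf, LinearMap.mem_ker]

lemma iInf_flat (hcover : ∀ j : ι, ∃ i, j ∈ P i) : ⨅ i, A.flat (P i) = A.flat Finset.univ := by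
  ext x
  simp only [Submodule.mem_iInf, mem_flat, Finset.mem_univ, forall_const]
  exact ⟨fun h j => (hcover j).elim fun i hi => h i j hi, fun h _ j _ => h j⟩

lemma rnkOn_eq_finrank_quotient (S : Finset ι) :
    A.rnkOn S = Module.finrank ℝ ((Fin ℓ → ℝ) ⧸ A.flat S) := by
  rw [Submodule.finrank_quotient, Module.finrank_fin_fun, rnkOn, flat]

variable {A}

lemma exists_forall_form_eq [Fintype κ] (hcover : ∀ j : ι, ∃ i, j ∈ P i)
    (hrnk : A.rnk = ∑ i, A.rnkOn (P i)) (x : κ → Fin ℓ → ℝ) :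
    ∃ y : Fin ℓ → ℝ, ∀ i, ∀ j ∈ P i, A.form j y = A.form j (x i) := by
  have hfinrank : Module.finrank ℝ ((Fin ℓ → ℝ) ⧸ ⨅ i, A.flat (P i)) =
      ∑ i, Module.finrank ℝ ((Fin ℓ → ℝ) ⧸ A.flat (P i)) := by
    rw [A.iInf_flat hcover]
    simpa only [rnk, rnkOn_eq_finrank_quotient] using hrnk
  obtain ⟨y, hy⟩ := surjective_pi_mkQ_of_finrank_quotient_iInf _ hfinrank
    fun i => (A.flat (P i)).mkQ (x i)
  refine ⟨y, fun i j hj => ?_⟩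
  have hmem : y - x i ∈ A.flat (P i) := (Submodule.Quotient.eq _).1 (congrFun hy i)
  rw [← sub_eq_zero, ← map_sub]
  exact A.mem_flat.1 hmem j hj

lemma injective_restrictCh_blocks (hcover : ∀ j : ι, ∃ i, j ∈ P i) :
    Function.Injective fun (C : A.Ch) i => A.restrictCh (P i) C := fun C D h =>
  Ch.ext_eps fun j => by
    obtain ⟨i, hj⟩ := hcover j
    have hi : A.restrictCh (P i) C = A.restrictCh (P i) D := congrFun h i
    rw [← eps_restrictCh C ⟨j, hj⟩, hi, eps_restrictCh]

lemma surjective_restrictCh_blocks [Fintype κ] (hcover : ∀ j : ι, ∃ i, j ∈ P i)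
    (hrnk : A.rnk = ∑ i, A.rnkOn (P i)) :
    Function.Surjective fun (C : A.Ch) i => A.restrictCh (P i) C := fun D => by
  choose x hx using fun i => (D i).nonempty
  obtain ⟨y, hy⟩ := exists_forall_form_eq hcover hrnk x
  have hyA : y ∈ A.Complement := fun j => by
    obtain ⟨i, hj⟩ := hcover j
    rw [hy i j hj]
    exact (D i).subset_complement (hx i) ⟨j, hj⟩
  refine ⟨chamberOf hyA, funext fun i => Ch.ext_eps fun j => ?_⟩
  rw [eps_restrictCh, eps_of_mem (mem_chamberOf hyA), eps_of_mem (hx i), hy i j.1 j.2]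
  rfl

end Blocks

section AdmissibleMaps

variable (A : Arrangement ℓ ι) {S : Finset ι} {m : ℕ}

/-- The set `AM(𝒜, m)` of admissible maps. -/
abbrev AM (m : ℕ) : Type := {Φ : (Fin m → A.Ch) → A.Ch // A.IsAdmissible m Φ}

variable {A}

/-- The map `Ψ` on chambers of the subarrangement indexed by `S` is induced by the map `Φ` on
chambers of `A`. -/
def RestrictsTo (Φ : (Fin m → A.Ch) → A.Ch)
    (Ψ : (Fin m → (A.restrict S).Ch) → (A.restrict S).Ch) : Prop :=
  ∀ C, A.restrictCh S (Φ C) = Ψ fun k => A.restrictCh S (C k)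

lemma IsAdmissible.eps_congr {Φ : (Fin m → A.Ch) → A.Ch} (hΦ : A.IsAdmissible m Φ) {j : ι}
    {σ : ℤˣ} {C D : Fin m → A.Ch} (h : ∀ k, A.eps j σ (C k) = A.eps j σ (D k)) :
    A.eps j σ (Φ C) = A.eps j σ (Φ D) := by
  obtain ⟨φ, -, hφ⟩ := hΦ
  rw [hφ, hφ, funext h]

lemma RestrictsTo.unique {Φ : (Fin m → A.Ch) → A.Ch}
    {Ψ Ψ' : (Fin m → (A.restrict S).Ch) → (A.restrict S).Ch}
    (h : RestrictsTo Φ Ψ) (h' : RestrictsTo Φ Ψ') : Ψ = Ψ' :=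
  (A.restrictCh_surjective S).comp_left.injective_comp_right <|
    funext fun C => (h C).symm.trans (h' C)

lemma RestrictsTo.isAdmissible {Φ : (Fin m → A.Ch) → A.Ch}
    {Ψ : (Fin m → (A.restrict S).Ch) → (A.restrict S).Ch}
    (h : RestrictsTo Φ Ψ) (hΦ : A.IsAdmissible m Φ) : (A.restrict S).IsAdmissible m Ψ := by
  obtain ⟨φ, hφ_one, hφ⟩ := hΦ
  refine ⟨fun j => φ j.1, fun j => hφ_one j.1, fun j σ D => ?_⟩
  obtain ⟨C, rfl⟩ := (A.restrictCh_surjective S).comp_left D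
  have hC : Ψ (A.restrictCh S ∘ C) = A.restrictCh S (Φ C) := (h C).symm
  simpa only [hC, Function.comp_apply, eps_restrictCh] using hφ j.1 σ C

lemma exists_restrictsTo (S : Finset ι) (Φ : A.AM m) :
    ∃ Ψ : (A.restrict S).AM m, RestrictsTo Φ.1 Ψ.1 := by
  choose lift hlift using A.restrictCh_surjective S
  have hΨ : RestrictsTo Φ.1 fun D => A.restrictCh S (Φ.1 fun k => lift (D k)) := fun C =>
    Ch.ext_eps fun j => by
      simp only [eps_restrictCh]
      refine Φ.2.eps_congr fun k => ?_
      rw [← eps_restrictCh (lift _) j, hlift, eps_restrictCh]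
  exact ⟨⟨_, hΨ.isAdmissible Φ.2⟩, hΨ⟩

section Blocks

variable {κ : Type*} {P : κ → Finset ι}

lemma eq_of_forall_restrictsTo (hcover : ∀ j : ι, ∃ i, j ∈ P i)
    {Φ Φ' : (Fin m → A.Ch) → A.Ch}
    {Ψ : ∀ i, (Fin m → (A.restrict (P i)).Ch) → (A.restrict (P i)).Ch}
    (h : ∀ i, RestrictsTo Φ (Ψ i)) (h' : ∀ i, RestrictsTo Φ' (Ψ i)) : Φ = Φ' :=
  funext fun C => injective_restrictCh_blocks hcover <|
    funext fun i => (h i C).trans (h' i C).symm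

lemma isAdmissible_of_forall_restrictsTo (hcover : ∀ j : ι, ∃ i, j ∈ P i)
    {Φ : (Fin m → A.Ch) → A.Ch} (Ψ : ∀ i, (A.restrict (P i)).AM m)
    (h : ∀ i, RestrictsTo Φ (Ψ i).1) : A.IsAdmissible m Φ := by
  choose block hblock using hcover
  choose ψ hψ_one hψ using fun i => (Ψ i).2
  refine ⟨fun j => ψ (block j) ⟨j, hblock j⟩, fun j => hψ_one _ _, fun j σ C => ?_⟩
  have hj := hψ (block j) ⟨j, hblock j⟩ σ fun k => A.restrictCh _ (C k)
  simpa only [← h (block j) C, eps_restrictCh] using hj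

lemma exists_forall_restrictsTo [Fintype κ] (hcover : ∀ j : ι, ∃ i, j ∈ P i)
    (hrnk : A.rnk = ∑ i, A.rnkOn (P i)) (Ψ : ∀ i, (A.restrict (P i)).AM m) :
    ∃ Φ : A.AM m, ∀ i, RestrictsTo Φ.1 (Ψ i).1 := by
  choose glue hglue using surjective_restrictCh_blocks hcover hrnk
  have hΦ (i : κ) : RestrictsTo (fun C => glue fun i => (Ψ i).1 fun k => A.restrictCh _ (C k))
      (Ψ i).1 := fun C => congrFun (hglue _) i
  exact ⟨⟨_, isAdmissible_of_forall_restrictsTo hcover Ψ hΦ⟩, hΦ⟩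

end Blocks

end AdmissibleMaps

end Arrangement

theorem am_decomposition_general {ℓ : ℕ} {ι : Type} [Fintype ι] (A : Arrangement ℓ ι)
    {κ : Type*} [Fintype κ] (P : κ → Finset ι)
    (hcover : ∀ j : ι, ∃ i, j ∈ P i)
    (hrnk : A.rnk = ∑ i, A.rnkOn (P i))
    (m : ℕ) :
    ∃ e : A.AM m ≃ ∀ i, (A.restrict (P i)).AM m,
      ∀ Φ i, Arrangement.RestrictsTo Φ.1 (e Φ i).1 := by
  choose toBlocks htoBlocks using
    fun (Φ : A.AM m) i => Arrangement.exists_restrictsTo (P i) Φ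
  choose ofBlocks hofBlocks using
    Arrangement.exists_forall_restrictsTo (m := m) hcover hrnk
  exact ⟨{
    toFun := toBlocks
    invFun := ofBlocks
    left_inv := fun Φ => Subtype.ext <|
      Arrangement.eq_of_forall_restrictsTo hcover (hofBlocks _) (htoBlocks Φ)
    right_inv := fun Ψ => funext fun i => Subtype.ext <|
      (htoBlocks _ i).unique (hofBlocks Ψ i) }, htoBlocks⟩

/-- **Theorem (decomposition of admissible maps).** If a nonempty real central arrangement
decomposes as `𝒜 = 𝒜₁ ⊎ ⋯ ⊎ 𝒜_r` into nonempty indecomposable arrangements, then there is a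
bijection `AM(𝒜, m) ≃ AM(𝒜₁, m) × ⋯ × AM(𝒜_r, m)`. -/
theorem am_decomposition {ℓ : ℕ} {ι : Type} [Fintype ι] [Nonempty ι] (A : Arrangement ℓ ι)
    (r : ℕ) (P : Fin r → Finset ι)
    (hne : ∀ i, (P i).Nonempty)
    (hdisj : Pairwise fun i k => Disjoint (P i) (P k))
    (hcover : ∀ j : ι, ∃ i, j ∈ P i)
    (hrnk : A.rnk = ∑ i, A.rnkOn (P i))
    (hind : ∀ i, A.IndecomposableOn (P i))
    (m : ℕ) (hm : 0 < m) :
    Nonempty (({Φ : (Fin m → A.Ch) → A.Ch // A.IsAdmissible m Φ}) ≃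
      (∀ i : Fin r, {Φ : (Fin m → (A.restrict (P i)).Ch) → (A.restrict (P i)).Ch //
        (A.restrict (P i)).IsAdmissible m Φ})) :=
  let ⟨e, _⟩ := am_decomposition_general A P hcover hrnk m
  ⟨e⟩
end
end

section
/- Any nonempty real central arrangement 𝒜 can be decomposed into nonempty indecomposable arrangements, 𝒜 = 𝒜₁ ⊎ 𝒜₂ ⊎ ⋯ ⊎ 𝒜_r, and this decomposition is unique up to the order of the factors. -/
/-!
The rank of a subarrangement is a submodular function `r` on the lattice of subarrangements,
because `codim (U ⊔ W) + codim (U ⊓ W) = codim U + codim W` for subspaces, and codimension is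
antitone.

Let `r` be a submodular function on a distributive lattice with `r ⊥ = 0`. If `s = a ⊔ b` is a
disjoint join along which `r` is additive, then submodularity forces
`r t = r (t ⊓ a) + r (t ⊓ b)` for every `t ≤ s`, so an indecomposable `t ≤ s` lies below `a` or
below `b`. Every part of an additive partition, together with the join of the other parts, is such
a pair `a`, `b`. Hence a partition into indecomposables refines every additive partition, and two
additive partitions into indecomposables refine each other.
-/

noncomputable section
attribute [local instance] Classical.propDecidable

section Submodular

variable {L M : Type*}

/-- Submodularity of a function on a lattice: the one property of the rank of a subarrangement on
which uniqueness of the decomposition rests. -/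
def Submodular [Lattice L] [Add M] [LE M] (r : L → M) : Prop :=
  ∀ s t, r (s ⊔ t) + r (s ⊓ t) ≤ r s + r t

/-- The lattice form of `𝒜 = 𝒜₁ ⊎ 𝒜₂`: the element `s` is the disjoint join of `a` and `b`, and `r`
is additive along it. The pieces `a` and `b` may be `⊥`. -/
structure IsAdditiveSplitting [Lattice L] [OrderBot L] [Add M] (r : L → M) (s a b : L) :
    Prop where
  disjoint : Disjoint a b
  sup_eq : a ⊔ b = s
  map_eq_add : r s = r a + r b

/-- The lattice form of indecomposability: `s` has no additive splitting into nonzero pieces. As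
with `Arrangement.IndecomposableOn`, the bottom element is indecomposable. -/
def AdditivelyIndecomposable [Lattice L] [OrderBot L] [Add M] (r : L → M) (s : L) : Prop :=
  ∀ a b, IsAdditiveSplitting r s a b → a = ⊥ ∨ b = ⊥

section Lattice

variable [Lattice L] [OrderBot L] {a b : L}

lemma disjoint_parts_of_disjoint (h : Disjoint a b) (P : Finpartition a) (Q : Finpartition b) :
    Disjoint P.parts Q.parts :=
  Finset.disjoint_left.2 fun _ hP hQ =>
    P.ne_bot hP (disjoint_self.1 (h.mono (P.le hP) (Q.le hQ)))

lemma Submodular.le_add_of_disjoint [AddZeroClass M] [LE M] {r : L → M} (hr : Submodular r)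
    (hr_bot : r ⊥ = 0) (h : Disjoint a b) : r (a ⊔ b) ≤ r a + r b := by
  simpa [h.eq_bot, hr_bot] using hr a b

variable [AddCommMonoid M] [PartialOrder M] [IsOrderedAddMonoid M] {r : L → M}

lemma Submodular.le_sum_of_supIndep {ι : Type*} {t : Finset ι} {f : ι → L} (hr : Submodular r)
    (hr_bot : r ⊥ = 0) (ht : t.SupIndep f) : r (t.sup f) ≤ ∑ i ∈ t, r (f i) := by
  induction t using Finset.cons_induction with
  | empty => simp [hr_bot]
  | cons i t hi ih =>
    have hsub : t ⊆ t.cons i hi := Finset.subset_cons hi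
    have hdisj : Disjoint (f i) (t.sup f) := ht hsub (Finset.mem_cons_self i t) hi
    rw [Finset.sup_cons, Finset.sum_cons]
    grw [hr.le_add_of_disjoint hr_bot hdisj, ih (ht.subset hsub)]

lemma Submodular.isAdditiveSplitting_erase [DecidableEq L] {s q : L} {Q : Finpartition s}
    (hr : Submodular r) (hr_bot : r ⊥ = 0) (hQ : r s = ∑ q ∈ Q.parts, r q) (hq : q ∈ Q.parts) :
    IsAdditiveSplitting r s q ((Q.parts.erase q).sup id) := by
  have hdisj : Disjoint q ((Q.parts.erase q).sup id) :=
    Q.supIndep (Finset.erase_subset _ _) hq (Finset.notMem_erase _ _)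
  have hsup : q ⊔ (Q.parts.erase q).sup id = s := by
    simpa [Finset.insert_erase hq, Q.sup_parts] using
      (Finset.sup_insert (s := Q.parts.erase q) (f := id) (b := q)).symm
  refine ⟨hdisj, hsup, le_antisymm ?_ ?_⟩
  · simpa [hsup] using hr.le_add_of_disjoint hr_bot hdisj
  · rw [hQ, ← Finset.add_sum_erase _ _ hq]
    grw [hr.le_sum_of_supIndep hr_bot (Q.supIndep.subset (Finset.erase_subset q _))]
    rfl

end Lattice

section ModularLattice

variable [Lattice L] [IsModularLattice L] [OrderBot L]

/-- The partition of a disjoint join `a ⊔ b` consisting of the parts of a partition of `a` and those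
of a partition of `b`. -/
@[simps]
def finpartitionSup [DecidableEq L] {a b : L} (h : Disjoint a b) (P : Finpartition a)
    (Q : Finpartition b) : Finpartition (a ⊔ b) where
  parts := P.parts ∪ Q.parts
  supIndep := P.supIndep.union Q.supIndep (by rwa [P.sup_parts, Q.sup_parts])
  sup_parts := by rw [Finset.sup_union, P.sup_parts, Q.sup_parts]
  bot_notMem := by simp [P.bot_notMem, Q.bot_notMem]

lemma exists_finpartition_additivelyIndecomposable [WellFoundedLT L] [AddCommMonoid M] {r : L → M}
    (hr_bot : r ⊥ = 0) (s : L) :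
    ∃ P : Finpartition s,
      r s = ∑ p ∈ P.parts, r p ∧ ∀ p ∈ P.parts, AdditivelyIndecomposable r p := by
  induction s using WellFoundedLT.induction with
  | _ s ih =>
  by_cases hs : AdditivelyIndecomposable r s
  · obtain rfl | hs_bot := eq_or_ne s ⊥
    · exact ⟨Finpartition.empty L, by simp [hr_bot]⟩
    · exact ⟨Finpartition.indiscrete hs_bot, by simpa using hs⟩
  · simp only [AdditivelyIndecomposable, not_forall, not_or] at hs
    obtain ⟨a, b, ⟨hab, rfl, hr_add⟩, ha, hb⟩ := hs
    obtain ⟨P, hP, hP_indec⟩ := ih a (sup_comm b a ▸ hab.symm.right_lt_sup_of_left_ne_bot hb)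
    obtain ⟨Q, hQ, hQ_indec⟩ := ih b (hab.right_lt_sup_of_left_ne_bot ha)
    refine ⟨finpartitionSup hab P Q, ?_, ?_⟩
    · rw [finpartitionSup_parts, Finset.sum_union (disjoint_parts_of_disjoint hab P Q), hr_add,
        hP, hQ]
    · simpa [or_imp, forall_and] using ⟨hP_indec, hQ_indec⟩

end ModularLattice

section DistribLattice

variable [DistribLattice L] [OrderBot L] [AddCommMonoid M] [PartialOrder M]
  [IsOrderedCancelAddMonoid M] {r : L → M} {s t a b : L}

lemma IsAdditiveSplitting.inf (h : IsAdditiveSplitting r s a b) (hr : Submodular r)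
    (hr_bot : r ⊥ = 0) (hts : t ≤ s) : IsAdditiveSplitting r t (t ⊓ a) (t ⊓ b) := by
  have hdisj : Disjoint (t ⊓ a) (t ⊓ b) := h.disjoint.mono inf_le_right inf_le_right
  have hsup : t ⊓ a ⊔ t ⊓ b = t := by rw [← inf_sup_left, h.sup_eq, inf_eq_left.2 hts]
  have hsup_b : (t ⊔ a) ⊔ b = s := by rw [sup_assoc, h.sup_eq, sup_eq_right.2 hts]
  have hinf_b : (t ⊔ a) ⊓ b = t ⊓ b := by rw [inf_sup_right, h.disjoint.eq_bot, sup_bot_eq]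
  refine ⟨hdisj, hsup, le_antisymm ?_ (le_of_add_le_add_right (a := r s + r (t ⊔ a)) ?_)⟩
  · simpa only [hsup] using hr.le_add_of_disjoint hr_bot hdisj
  · calc r (t ⊓ a) + r (t ⊓ b) + (r s + r (t ⊔ a))
        = (r (t ⊔ a) + r (t ⊓ a)) + (r ((t ⊔ a) ⊔ b) + r ((t ⊔ a) ⊓ b)) := by
          rw [hsup_b, hinf_b]; abel
      _ ≤ (r t + r a) + (r (t ⊔ a) + r b) := add_le_add (hr t a) (hr (t ⊔ a) b)
      _ = r t + (r s + r (t ⊔ a)) := by rw [h.map_eq_add]; abel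

lemma AdditivelyIndecomposable.le_of_not_disjoint (ht : AdditivelyIndecomposable r t)
    (hr : Submodular r) (hr_bot : r ⊥ = 0) (h : IsAdditiveSplitting r s a b) (hts : t ≤ s)
    (hta : ¬Disjoint t a) : t ≤ a := by
  have hsplit := h.inf hr hr_bot hts
  have htb : t ⊓ b = ⊥ := (ht _ _ hsplit).resolve_left (hta ∘ disjoint_iff.2)
  exact inf_eq_left.1 (by simpa only [htb, sup_bot_eq] using hsplit.sup_eq)

lemma Submodular.finpartition_le (hr : Submodular r) (hr_bot : r ⊥ = 0) {P Q : Finpartition s}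
    (hP : ∀ p ∈ P.parts, AdditivelyIndecomposable r p) (hQ : r s = ∑ q ∈ Q.parts, r q) :
    P ≤ Q := by
  intro p hp
  obtain ⟨q, hq, hpq⟩ : ∃ q ∈ Q.parts, ¬Disjoint p q := by
    by_contra! h
    have hps : Disjoint p s := Q.sup_parts ▸ Finset.disjoint_sup_right.2 h
    exact P.ne_bot hp (hps.eq_bot_of_le (P.le hp))
  exact ⟨q, hq, (hP p hp).le_of_not_disjoint hr hr_bot (hr.isAdditiveSplitting_erase hr_bot hQ hq)
    (P.le hp) hpq⟩

theorem unique_indecomposable_decomposition_general [WellFoundedLT L] (hr : Submodular r)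
    (hr_bot : r ⊥ = 0) (s : L) :
    ∃! P : Finpartition s,
      r s = ∑ p ∈ P.parts, r p ∧ ∀ p ∈ P.parts, AdditivelyIndecomposable r p := by
  obtain ⟨P, hP, hP_indec⟩ := exists_finpartition_additivelyIndecomposable hr_bot s
  exact ⟨P, ⟨hP, hP_indec⟩, fun Q ⟨hQ, hQ_indec⟩ =>
    (hr.finpartition_le hr_bot hQ_indec hP).antisymm (hr.finpartition_le hr_bot hP_indec hQ)⟩

end DistribLattice

end Submodular

section Codimension

variable {K V : Type*} [DivisionRing K] [AddCommGroup V] [Module K V] [FiniteDimensional K V]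

/-- The codimension of a subspace. Measuring the rank of a subarrangement by the dimension of a
quotient avoids the truncated subtraction in `Arrangement.rnkOn`. -/
def codim (U : Submodule K V) : ℕ :=
  Module.finrank K (V ⧸ U)

lemma codim_add_finrank (U : Submodule K V) : codim U + Module.finrank K U = Module.finrank K V :=
  U.finrank_quotient_add_finrank

lemma codim_antitone : Antitone (codim : Submodule K V → ℕ) := fun _ _ h =>
  LinearMap.finrank_le_finrank_of_surjective (Submodule.factor_surjective h)

lemma codim_sup_add_codim_inf (U W : Submodule K V) :
    codim (U ⊔ W) + codim (U ⊓ W) = codim U + codim W := by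
  have hdim := Submodule.finrank_sup_add_finrank_inf_eq U W
  have hU := codim_add_finrank U
  have hW := codim_add_finrank W
  have hsup := codim_add_finrank (U ⊔ W)
  have hinf := codim_add_finrank (U ⊓ W)
  lia

lemma submodular_codim_biInf {ι : Type*} [DecidableEq ι] (H : ι → Submodule K V) :
    Submodular fun S : Finset ι => codim (⨅ j ∈ S, H j) := fun S T =>
  have hinter : (⨅ j ∈ S, H j) ⊔ (⨅ j ∈ T, H j) ≤ ⨅ j ∈ S ∩ T, H j :=
    sup_le (biInf_mono fun _ => Finset.mem_of_mem_inter_left)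
      (biInf_mono fun _ => Finset.mem_of_mem_inter_right)
  calc codim (⨅ j ∈ S ∪ T, H j) + codim (⨅ j ∈ S ∩ T, H j)
      = codim (⨅ j ∈ S ∩ T, H j) + codim ((⨅ j ∈ S, H j) ⊓ ⨅ j ∈ T, H j) := by
        rw [Finset.iInf_union, add_comm]
    _ ≤ codim ((⨅ j ∈ S, H j) ⊔ ⨅ j ∈ T, H j) + codim ((⨅ j ∈ S, H j) ⊓ ⨅ j ∈ T, H j) :=
        Nat.add_le_add_right (codim_antitone hinter) _
    _ = codim (⨅ j ∈ S, H j) + codim (⨅ j ∈ T, H j) := codim_sup_add_codim_inf _ _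

end Codimension

namespace Arrangement

variable {ℓ : ℕ} {ι : Type} [Fintype ι] (A : Arrangement ℓ ι)

lemma rnkOn_eq_codim (S : Finset ι) :
    A.rnkOn S = codim (⨅ j ∈ S, LinearMap.ker (A.form j)) := by
  rw [rnkOn, codim, Submodule.finrank_quotient, Module.finrank_fin_fun]

lemma submodular_rnkOn : Submodular A.rnkOn := by
  rw [funext A.rnkOn_eq_codim]
  exact submodular_codim_biInf _

lemma rnkOn_bot : A.rnkOn ⊥ = 0 := by
  have htop : ⨅ j ∈ (⊥ : Finset ι), LinearMap.ker (A.form j) = ⊤ := by simp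
  rw [rnkOn, htop, finrank_top, Module.finrank_fin_fun, Nat.sub_self]

lemma additivelyIndecomposable_rnkOn_iff {S : Finset ι} :
    AdditivelyIndecomposable A.rnkOn S ↔ A.IndecomposableOn S := by
  simp only [IndecomposableOn, DecomposableOn, Finset.nonempty_iff_ne_empty]
  constructor
  · rintro h ⟨S₁, S₂, hS₁, hS₂, hdisj, hunion, hr⟩
    exact (h S₁ S₂ ⟨hdisj, hunion, hr⟩).elim hS₁ hS₂
  · intro h S₁ S₂ ⟨hdisj, hunion, hr⟩
    by_contra! hne
    exact h ⟨S₁, S₂, hne.1, hne.2, hdisj, hunion, hr⟩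

end Arrangement

section Finset

variable {ι : Type*} [Fintype ι]

lemma exists_finpartition_univ_parts_eq_iff {Q : Finset (Finset ι)} :
    (∃ P : Finpartition (Finset.univ : Finset ι), P.parts = Q) ↔
      (∀ q ∈ Q, q.Nonempty) ∧ (Q : Set (Finset ι)).PairwiseDisjoint id ∧ ∀ j, ∃ q ∈ Q, j ∈ q := by
  constructor
  · rintro ⟨P, rfl⟩
    exact ⟨fun _ => P.nonempty_of_mem_parts, P.disjoint, fun j => P.exists_mem (Finset.mem_univ j)⟩
  · rintro ⟨hne, hdisj, hcover⟩
    exact ⟨{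
      parts := Q
      supIndep := hdisj.supIndep
      sup_parts := by simpa [Finset.eq_univ_iff_forall, Finset.mem_sup] using hcover
      bot_notMem := fun h => (hne _ h).ne_empty rfl }, rfl⟩

lemma existsUnique_finpartition_univ_iff {p : Finset (Finset ι) → Prop} :
    (∃! P : Finpartition (Finset.univ : Finset ι), p P.parts) ↔
      ∃! Q : Finset (Finset ι), (∀ q ∈ Q, q.Nonempty) ∧
        (Q : Set (Finset ι)).PairwiseDisjoint id ∧ (∀ j, ∃ q ∈ Q, j ∈ q) ∧ p Q := by
  have hparts (Q : Finset (Finset ι)) : ((∀ q ∈ Q, q.Nonempty) ∧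
      (Q : Set (Finset ι)).PairwiseDisjoint id ∧ (∀ j, ∃ q ∈ Q, j ∈ q) ∧ p Q) ↔
      (∃ P : Finpartition (Finset.univ : Finset ι), P.parts = Q) ∧ p Q := by
    simp only [exists_finpartition_univ_parts_eq_iff, and_assoc]
  simp only [hparts]
  constructor
  · rintro ⟨P, hP, huniq⟩
    refine ⟨P.parts, ⟨⟨P, rfl⟩, hP⟩, ?_⟩
    rintro _ ⟨⟨Q, rfl⟩, hQ⟩
    rw [huniq Q hQ]
  · rintro ⟨_, ⟨⟨P, rfl⟩, hP⟩, huniq⟩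
    exact ⟨P, hP, fun Q hQ => Finpartition.ext (huniq _ ⟨⟨Q, rfl⟩, hQ⟩)⟩

end Finset

/-- **Proposition.** Any nonempty real central arrangement decomposes, uniquely up to the
order of the factors, into nonempty indecomposable arrangements
`𝒜 = 𝒜₁ ⊎ 𝒜₂ ⊎ ⋯ ⊎ 𝒜_r` (the decomposition is recorded as the unordered set of parts). -/
theorem unique_indecomposable_decomposition {ℓ : ℕ} {ι : Type} [Fintype ι] [Nonempty ι]
    (A : Arrangement ℓ ι) :
    ∃! P : Finset (Finset ι),
      (∀ p ∈ P, p.Nonempty) ∧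
      (P : Set (Finset ι)).PairwiseDisjoint id ∧
      (∀ j : ι, ∃ p ∈ P, j ∈ p) ∧
      A.rnk = ∑ p ∈ P, A.rnkOn p ∧
      ∀ p ∈ P, A.IndecomposableOn p := by
  refine existsUnique_finpartition_univ_iff.1 ?_
  simpa only [A.additivelyIndecomposable_rnkOn_iff] using!
    unique_indecomposable_decomposition_general A.submodular_rnkOn A.rnkOn_bot Finset.univ
end
end
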